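/- arXiv:2103.16253 — 3 statements merged into one kernel-verified Lean document; each statement's English description precedes it below -/
import Mathlib

section
/- Let H : ℝ^d → Set(ℝ^d) be a set-valued map such that (i) for every x ∈ ℝ^d, H(x) is nonempty, convex and compact, (ii) there is a constant C ≥ 0 with sup{‖v‖ : v ∈ H(x)} ≤ C(1 + ‖x‖) for all x, and (iii) H is upper semicontinuous at every point. Then for every x₀ ∈ ℝ^d there exists an absolutely continuous curve x : ℝ₊ → ℝ^d with x(0) = x₀ which is a solution of the differential inclusion ẋ(t) ∈ H(x(t)). -/
open MeasureTheory Filter Set RealInnerProductSpace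

noncomputable section

/-- `ℝ^d` with the Euclidean structure. -/
abbrev Ed (d : ℕ) := EuclideanSpace ℝ (Fin d)

/-- An absolutely continuous curve `x : ℝ₊ → ℝ^d` which is a solution of the differential
inclusion `ẋ(t) ∈ H(x(t))`: `x(t) = x(0) + ∫₀ᵗ u` with `u` locally integrable and
`u(t) ∈ H(x(t))` for almost every `t ≥ 0`. -/
def IsSolutionOn {d : ℕ} (H : Ed d → Set (Ed d)) (x : ℝ → Ed d) : Prop :=
  ∃ u : ℝ → Ed d, LocallyIntegrableOn u (Ici (0:ℝ)) ∧
    (∀ t ∈ Ici (0:ℝ), x t = x 0 + ∫ s in (0:ℝ)..t, u s) ∧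
    (∀ᵐ t ∂(volume.restrict (Ici (0:ℝ))), u t ∈ H (x t))

/-- The set-valued map `H` is upper semicontinuous at `x`: for every open neighborhood `U`
of `H(x)` there is `δ > 0` such that `‖y − x‖ ≤ δ` implies `H(y) ⊆ U`. -/
def USCMapAt {d : ℕ} (H : Ed d → Set (Ed d)) (x : Ed d) : Prop :=
  ∀ U : Set (Ed d), IsOpen U → H x ⊆ U → ∃ δ > (0:ℝ), ∀ y : Ed d, ‖y - x‖ ≤ δ → H y ⊆ U

/-!
Choose `f x ∈ H x` with `‖f x‖ ≤ C * (1 + ‖x‖)` and run the explicit Euler scheme for `ẋ = f(x)`,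
although `f` need not be continuous. By a discrete Grönwall estimate the Euler nodes are Lipschitz
in time on bounded intervals, uniformly in the step size, so along an ultrafilter of step sizes
tending to `0⁺` the schemes converge pointwise to a locally Lipschitz curve `x`. A difference
quotient of a scheme just after time `t` is an average of velocities `f y ∈ H y` with `y` near
`x t`; upper semicontinuity puts these in a thickening of the convex set `H (x t)`, hence also the
averages and their limits. Thus `ẋ(t) ∈ H (x t)` wherever the derivative exists, which is almost
everywhere, and a Lipschitz curve is the integral of its derivative.
-/

open scoped Topology NNReal

section LipschitzCurve

variable {E : Type*} [NormedAddCommGroup E] [NormedSpace ℝ E] {x : ℝ → E} {K : ℝ≥0} {a b : ℝ}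

theorem integrableOn_deriv_of_lipschitzOnWith_Icc [CompleteSpace E]
    (hx : LipschitzOnWith K x (Icc a b)) :
    IntegrableOn (deriv x) (Icc a b) := by
  rw [integrableOn_Icc_iff_integrableOn_Ioo]
  refine Measure.integrableOn_of_bounded (M := K) (by simp)
    (stronglyMeasurable_deriv x).aestronglyMeasurable ?_
  filter_upwards [ae_restrict_mem measurableSet_Ioo] with t ht
  exact norm_deriv_le_of_lipschitzOn (Icc_mem_nhds ht.1 ht.2) hx

theorem integral_deriv_eq_sub_of_lipschitzOnWith_Icc [CompleteSpace E] (hab : a ≤ b)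
    (hx : LipschitzOnWith K x (Icc a b))
    (hdiff : ∀ᵐ t, t ∈ Ioc a b → DifferentiableAt ℝ x t) :
    ∫ t in a..b, deriv x t = x b - x a := by
  have hint : IntervalIntegrable (deriv x) volume a b :=
    (intervalIntegrable_iff_integrableOn_Icc_of_le hab).2
      (integrableOn_deriv_of_lipschitzOnWith_Icc hx)
  refine (SeparatingDual.eq_iff_forall_dual_eq (R := ℝ)).2 fun g => ?_
  have hac : AbsolutelyContinuousOnInterval (g ∘ x) a b :=
    (g.lipschitz.comp_lipschitzOnWith (uIcc_of_le hab ▸ hx)).absolutelyContinuousOnInterval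
  have hderiv : ∫ t in a..b, g (deriv x t) = ∫ t in a..b, deriv (g ∘ x) t := by
    refine intervalIntegral.integral_congr_ae ?_
    filter_upwards [hdiff] with t ht htab
    exact (g.hasFDerivAt.comp_hasDerivAt t
      (ht (uIoc_of_le hab ▸ htab)).hasDerivAt).deriv.symm
  calc g (∫ t in a..b, deriv x t) = ∫ t in a..b, g (deriv x t) :=
        (g.intervalIntegral_comp_comm hint).symm
    _ = g (x b) - g (x a) := hderiv.trans hac.integral_deriv_eq_sub
    _ = g (x b - x a) := (map_sub g _ _).symm

theorem locallyIntegrableOn_deriv_of_lipschitzOnWith_Icc [CompleteSpace E]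
    (hx : ∀ T, ∃ K, LipschitzOnWith K x (Icc a T)) :
    LocallyIntegrableOn (deriv x) (Ici a) := by
  rw [locallyIntegrableOn_iff isClosed_Ici.isLocallyClosed]
  intro k hk hkc
  obtain ⟨T, hT⟩ := hkc.bddAbove
  obtain ⟨K, hK⟩ := hx T
  exact (integrableOn_deriv_of_lipschitzOnWith_Icc hK).mono_set fun t ht => ⟨hk ht, hT ht⟩

theorem ae_differentiableAt_of_lipschitzOnWith_Icc [FiniteDimensional ℝ E]
    (hx : ∀ T, ∃ K, LipschitzOnWith K x (Icc a T)) :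
    ∀ᵐ t, t ∈ Ioi a → DifferentiableAt ℝ x t := by
  have hwithin (n : ℕ) :
      ∀ᵐ t, t ∈ Icc a n → DifferentiableWithinAt ℝ x (Icc a n) t :=
    let ⟨_, hK⟩ := hx n
    hK.ae_differentiableWithinAt_of_mem_real
  filter_upwards [ae_all_iff.2 hwithin] with t ht hat
  obtain ⟨n, hn⟩ := exists_nat_gt t
  exact (ht n ⟨hat.le, hn.le⟩).differentiableAt (Icc_mem_nhds hat hn)

end LipschitzCurve

section EulerScheme

variable {E : Type*} [NormedAddCommGroup E] [NormedSpace ℝ E]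
  {f : E → E} {x₀ : E} {h : ℝ} {j k : ℕ}

/-- The nodes of the explicit Euler scheme with step `h` for the differential equation `ẋ = f(x)`
with initial value `x₀`; node `k` approximates the solution at time `k * h`. -/
def eulerNode (f : E → E) (h : ℝ) (x₀ : E) : ℕ → E
  | 0 => x₀
  | k + 1 => eulerNode f h x₀ k + h • f (eulerNode f h x₀ k)

theorem eulerNode_sub_eq_sum (hjk : j ≤ k) :
    eulerNode f h x₀ k - eulerNode f h x₀ j =
      ∑ i ∈ Finset.Ico j k, h • f (eulerNode f h x₀ i) := by
  rw [← Finset.sum_Ico_sub _ hjk]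
  simp only [eulerNode, add_sub_cancel_left]

theorem sum_Ico_const_eq_sub (hjk : j ≤ k) : ∑ _i ∈ Finset.Ico j k, h = k * h - j * h := by
  rw [Finset.sum_const, Nat.card_Ico, nsmul_eq_mul, Nat.cast_sub hjk, sub_mul]

theorem norm_eulerNode_sub_le {B : ℝ} (hh : 0 ≤ h) (hjk : j ≤ k)
    (hB : ∀ i ∈ Finset.Ico j k, ‖f (eulerNode f h x₀ i)‖ ≤ B) :
    ‖eulerNode f h x₀ k - eulerNode f h x₀ j‖ ≤ B * (k * h - j * h) := by
  rw [eulerNode_sub_eq_sum hjk, ← sum_Ico_const_eq_sub hjk, Finset.mul_sum]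
  refine norm_sum_le_of_le _ fun i hi => ?_
  rw [norm_smul, Real.norm_of_nonneg hh, mul_comm]
  exact mul_le_mul_of_nonneg_right (hB i hi) hh

theorem inv_smul_eulerNode_sub_mem {s : Set E} (hs : Convex ℝ s) (hh : 0 < h) (hjk : j < k)
    (hf : ∀ i ∈ Finset.Ico j k, f (eulerNode f h x₀ i) ∈ s) :
    (k * h - j * h)⁻¹ • (eulerNode f h x₀ k - eulerNode f h x₀ j) ∈ s := by
  have hpos : 0 < ∑ _i ∈ Finset.Ico j k, h :=
    Finset.sum_pos (fun _ _ => hh) (Finset.nonempty_Ico.2 hjk)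
  rw [eulerNode_sub_eq_sum hjk.le, ← sum_Ico_const_eq_sub hjk.le]
  exact hs.centerMass_mem (fun _ _ => hh.le) hpos hf

theorem one_add_norm_eulerNode_le {C : ℝ} (hh : 0 ≤ h) (hf : ∀ v, ‖f v‖ ≤ C * (1 + ‖v‖)) (k : ℕ) :
    1 + ‖eulerNode f h x₀ k‖ ≤ Real.exp (C * (k * h)) * (1 + ‖x₀‖) := by
  induction k with
  | zero => simp [eulerNode]
  | succ k ih =>
    set v := eulerNode f h x₀ k
    have hstep : ‖v + h • f v‖ ≤ ‖v‖ + h * (C * (1 + ‖v‖)) := by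
      refine (norm_add_le _ _).trans ?_
      rw [norm_smul, Real.norm_of_nonneg hh]
      gcongr
      exact hf v
    calc 1 + ‖v + h • f v‖ ≤ (C * h + 1) * (1 + ‖v‖) := by linarith
      _ ≤ Real.exp (C * h) * (Real.exp (C * (k * h)) * (1 + ‖x₀‖)) := by
        gcongr
        exact Real.add_one_le_exp _
      _ = Real.exp (C * ((k + 1 : ℕ) * h)) * (1 + ‖x₀‖) := by
        rw [← mul_assoc, ← Real.exp_add]
        push_cast
        ring_nf

/-- The Euler schemes for `ẋ = f(x)` started at `x₀` are Lipschitz in time on every bounded time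
interval, uniformly in the step size. -/
def EulerEquiLipschitz (f : E → E) (x₀ : E) : Prop :=
  ∀ T : ℝ, ∃ M : ℝ≥0, ∀ h > 0, ∀ j k : ℕ, j ≤ k → k * h ≤ T →
    ‖eulerNode f h x₀ k - eulerNode f h x₀ j‖ ≤ M * (k * h - j * h)

theorem eulerEquiLipschitz_of_linear_growth {C : ℝ} (hf : ∀ v, ‖f v‖ ≤ C * (1 + ‖v‖)) (x₀ : E) :
    EulerEquiLipschitz f x₀ := by
  have hC : 0 ≤ C := by simpa using (norm_nonneg _).trans (hf 0)
  intro T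
  refine ⟨⟨C * (Real.exp (C * T) * (1 + ‖x₀‖)), by positivity⟩, fun h hh j k hjk hkT => ?_⟩
  refine norm_eulerNode_sub_le hh.le hjk fun i hi => ?_
  have hiT : i * h ≤ T := by
    refine le_trans ?_ hkT
    gcongr
    exact (Finset.mem_Ico.1 hi).2.le
  calc ‖f (eulerNode f h x₀ i)‖ ≤ C * (1 + ‖eulerNode f h x₀ i‖) := hf _
    _ ≤ C * (Real.exp (C * (i * h)) * (1 + ‖x₀‖)) := by
      gcongr
      exact one_add_norm_eulerNode_le hh.le hf i
    _ ≤ C * (Real.exp (C * T) * (1 + ‖x₀‖)) := by gcongr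

end EulerScheme

section GridFloor

variable {h t : ℝ}

/-- The largest multiple `k * h`, `k : ℕ`, of the step `h > 0` that is at most `t`; it is `0` for
negative `t`. -/
def gridFloor (h t : ℝ) : ℝ := ⌊t / h⌋₊ * h

theorem gridFloor_le (hh : 0 < h) (ht : 0 ≤ t) : gridFloor h t ≤ t :=
  (le_div_iff₀ hh).1 (Nat.floor_le (by positivity))

theorem tendsto_gridFloor (ht : 0 ≤ t) : Tendsto (gridFloor · t) (𝓝[>] 0) (𝓝 t) := by
  refine ((tendsto_nat_floor_mul_div_atTop ht).comp tendsto_inv_nhdsGT_zero).congr fun h => ?_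
  simp only [gridFloor, Function.comp_apply, div_eq_mul_inv, inv_inv]

end GridFloor

section EulerLimit

variable {E : Type*} [NormedAddCommGroup E] [NormedSpace ℝ E]
  {f : E → E} {x₀ v : E} {x : ℝ → E} {l : Filter ℝ} {s : Set E} {t : ℝ}

/-- The Euler scheme with step `h` as a piecewise constant curve: the value at time `t` is the node
at time `gridFloor h t`. -/
def eulerCurve (f : E → E) (h : ℝ) (x₀ : E) (t : ℝ) : E := eulerNode f h x₀ ⌊t / h⌋₊

/-- The curve `x` is the pointwise limit along `l` of the Euler curves, the filter `l` describing
how the step size `h` varies. -/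
def IsEulerLimit (f : E → E) (x₀ : E) (l : Filter ℝ) (x : ℝ → E) : Prop :=
  ∀ t, Tendsto (eulerCurve f · x₀ t) l (𝓝 (x t))

theorem EulerEquiLipschitz.exists_norm_eulerCurve_le (hL : EulerEquiLipschitz f x₀) (t : ℝ) :
    ∃ R, ∀ h > 0, ‖eulerCurve f h x₀ t‖ ≤ R := by
  obtain ⟨M, hM⟩ := hL (max t 0)
  refine ⟨‖x₀‖ + M * max t 0, fun h hh => ?_⟩
  have hgrid : ⌊t / h⌋₊ * h ≤ max t 0 := by
    calc ⌊t / h⌋₊ * h ≤ gridFloor h (max t 0) := by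
          unfold gridFloor
          gcongr
          exact le_max_left t 0
      _ ≤ max t 0 := gridFloor_le hh (le_max_right t 0)
  have hdist : ‖eulerCurve f h x₀ t - x₀‖ ≤ M * max t 0 := by
    refine (hM h hh 0 _ (Nat.zero_le _) hgrid).trans ?_
    gcongr
    simpa using hgrid
  exact (norm_le_norm_add_norm_sub' _ x₀).trans (by gcongr)

theorem EulerEquiLipschitz.exists_isEulerLimit [ProperSpace E] (hL : EulerEquiLipschitz f x₀)
    (𝒰 : Ultrafilter ℝ) (h𝒰 : ↑𝒰 ≤ 𝓝[>] (0 : ℝ)) : ∃ x : ℝ → E, IsEulerLimit f x₀ 𝒰 x := by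
  have hlim (t : ℝ) : ∃ p, Tendsto (eulerCurve f · x₀ t) 𝒰 (𝓝 p) := by
    obtain ⟨R, hR⟩ := hL.exists_norm_eulerCurve_le t
    have hball : ∀ᶠ h in 𝒰, eulerCurve f h x₀ t ∈ Metric.closedBall 0 R :=
      h𝒰 <| eventually_mem_nhdsWithin.mono fun h hh => mem_closedBall_zero_iff.2 (hR h hh)
    obtain ⟨p, -, hp⟩ := (isCompact_closedBall (0 : E) R).ultrafilter_le_nhds
      (𝒰.map (eulerCurve f · x₀ t)) (le_principal_iff.2 hball)
    exact ⟨p, hp⟩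
  choose x hx using hlim
  exact ⟨x, hx⟩

namespace IsEulerLimit

theorem apply_zero [l.NeBot] (hx : IsEulerLimit f x₀ l x) : x 0 = x₀ := by
  refine tendsto_nhds_unique (hx 0) ?_
  simp only [eulerCurve, zero_div, Nat.floor_zero, eulerNode, tendsto_const_nhds]

theorem lipschitzOnWith [l.NeBot] (hx : IsEulerLimit f x₀ l x) (hl : l ≤ 𝓝[>] 0)
    (hL : EulerEquiLipschitz f x₀) (T : ℝ) : ∃ K, LipschitzOnWith K x (Icc 0 T) := by
  obtain ⟨M, hM⟩ := hL T
  refine ⟨M, LipschitzOnWith.of_dist_le_mul fun r hr t ht => ?_⟩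
  wlog htr : t ≤ r generalizing r t
  · rw [dist_comm, dist_comm r]
    exact this t ht r hr (le_of_not_ge htr)
  rw [dist_eq_norm, Real.dist_eq, abs_of_nonneg (sub_nonneg.2 htr)]
  have hgrid : Tendsto (fun h => gridFloor h r - gridFloor h t) l (𝓝 (r - t)) :=
    ((tendsto_gridFloor hr.1).sub (tendsto_gridFloor ht.1)).mono_left hl
  refine le_of_tendsto_of_tendsto ((hx r).sub (hx t)).norm (hgrid.const_mul (M : ℝ)) ?_
  filter_upwards [hl self_mem_nhdsWithin] with h (hh : 0 < h)
  exact hM h hh _ _ (by gcongr) ((gridFloor_le hh hr.1).trans hr.2)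

theorem eventually_eulerNode_mem (hx : IsEulerLimit f x₀ l x) (hl : l ≤ 𝓝[>] 0)
    (hL : EulerEquiLipschitz f x₀) (ht : 0 ≤ t) (hs : s ∈ 𝓝 (x t)) :
    ∀ᶠ r in 𝓝[>] t, ∀ᶠ h in l, ∀ i ∈ Finset.Ico ⌊t / h⌋₊ ⌊r / h⌋₊, eulerNode f h x₀ i ∈ s := by
  obtain ⟨δ, hδ, hball⟩ := Metric.mem_nhds_iff.1 hs
  obtain ⟨M, hM⟩ := hL (t + 1)
  have hshort : ∀ᶠ r in 𝓝[>] t, M * (r - t) < δ / 2 := by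
    have hcont : Continuous fun r : ℝ => M * (r - t) := by fun_prop
    exact nhdsWithin_le_nhds <| hcont.continuousAt.eventually_lt_const (by simpa using half_pos hδ)
  filter_upwards [hshort, Ioo_mem_nhdsGT (lt_add_one t)] with r hrδ ⟨htr, hrT⟩
  have hr : 0 ≤ r := ht.trans htr.le
  have hgrid : Tendsto (fun h => M * (gridFloor h r - gridFloor h t)) l (𝓝 (M * (r - t))) :=
    (((tendsto_gridFloor hr).sub (tendsto_gridFloor ht)).mono_left hl).const_mul _
  filter_upwards [hl self_mem_nhdsWithin, hgrid.eventually_lt_const hrδ,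
    hx t (Metric.ball_mem_nhds (x t) (half_pos hδ))] with h (hh : 0 < h) hhδ hclose i hi
  obtain ⟨hti, hir⟩ := Finset.mem_Ico.1 hi
  have hir' : i * h ≤ gridFloor h r := mul_le_mul_of_nonneg_right (by exact_mod_cast hir.le) hh.le
  have hnode : dist (eulerNode f h x₀ i) (eulerCurve f h x₀ t) < δ / 2 := by
    rw [dist_eq_norm]
    calc ‖eulerNode f h x₀ i - eulerCurve f h x₀ t‖ ≤ M * (i * h - gridFloor h t) :=
          hM h hh _ _ hti (hir'.trans ((gridFloor_le hh hr).trans hrT.le))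
      _ ≤ M * (gridFloor h r - gridFloor h t) := by gcongr
      _ < δ / 2 := hhδ
  exact hball <| (dist_triangle _ _ _).trans_lt <|
    (add_lt_add hnode hclose).trans_eq (add_halves δ)

theorem eventually_slope_mem [l.NeBot] (hx : IsEulerLimit f x₀ l x) (hl : l ≤ 𝓝[>] 0)
    (hL : EulerEquiLipschitz f x₀) (ht : 0 ≤ t) (hconv : Convex ℝ s) (hclosed : IsClosed s)
    (hf : ∀ᶠ y in 𝓝 (x t), f y ∈ s) : ∀ᶠ r in 𝓝[>] t, slope x t r ∈ s := by
  filter_upwards [hx.eventually_eulerNode_mem hl hL ht hf, self_mem_nhdsWithin]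
    with r hnode (htr : t < r)
  have hgrid : Tendsto (fun h => gridFloor h r - gridFloor h t) l (𝓝 (r - t)) :=
    ((tendsto_gridFloor (ht.trans htr.le)).sub (tendsto_gridFloor ht)).mono_left hl
  rw [slope_def_module]
  refine hclosed.mem_of_tendsto
    ((hgrid.inv₀ (sub_pos.2 htr).ne').smul ((hx r).sub (hx t))) ?_
  filter_upwards [hl self_mem_nhdsWithin, hgrid.eventually_const_lt (sub_pos.2 htr), hnode]
    with h (hh : 0 < h) hlt hmem
  have hfloor : ⌊t / h⌋₊ < ⌊r / h⌋₊ := by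
    exact_mod_cast lt_of_mul_lt_mul_right (sub_pos.1 hlt) hh.le
  exact inv_smul_eulerNode_sub_mem hconv hh hfloor hmem

theorem hasDerivWithinAt_mem [l.NeBot] (hx : IsEulerLimit f x₀ l x) (hl : l ≤ 𝓝[>] 0)
    (hL : EulerEquiLipschitz f x₀) (ht : 0 ≤ t) (hconv : Convex ℝ s) (hclosed : IsClosed s)
    (hf : ∀ᶠ y in 𝓝 (x t), f y ∈ s) (hv : HasDerivWithinAt x v (Ioi t) t) : v ∈ s :=
  hclosed.mem_of_tendsto ((hasDerivWithinAt_iff_tendsto_slope' self_notMem_Ioi).1 hv)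
    (hx.eventually_slope_mem hl hL ht hconv hclosed hf)

theorem hasDerivWithinAt_mem_of_upperHemicontinuousAt [l.NeBot] {H : E → Set E}
    (hx : IsEulerLimit f x₀ l x) (hl : l ≤ 𝓝[>] 0) (hL : EulerEquiLipschitz f x₀) (ht : 0 ≤ t)
    (hfH : ∀ y, f y ∈ H y) (hconv : Convex ℝ (H (x t))) (hclosed : IsClosed (H (x t)))
    (hH : UpperHemicontinuousAt H (x t)) (hv : HasDerivWithinAt x v (Ioi t) t) : v ∈ H (x t) := by
  rw [← hclosed.closure_eq, Metric.closure_eq_iInter_cthickening, mem_iInter₂]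
  intro ε hε
  have hthick : ∀ᶠ y in 𝓝 (x t), H y ⊆ Metric.thickening ε (H (x t)) :=
    hH.forall_isOpen _ Metric.isOpen_thickening (Metric.self_subset_thickening hε _)
  exact hx.hasDerivWithinAt_mem hl hL ht (hconv.cthickening ε) Metric.isClosed_cthickening
    (hthick.mono fun y hy => Metric.thickening_subset_cthickening _ _ (hy (hfH y))) hv

end IsEulerLimit

end EulerLimit

theorem USCMapAt.upperHemicontinuousAt {d : ℕ} {H : Ed d → Set (Ed d)} {x : Ed d}
    (hH : USCMapAt H x) : UpperHemicontinuousAt H x := by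
  refine upperHemicontinuousAt_iff_forall_isOpen.2 fun U hU hHU => ?_
  obtain ⟨δ, hδ, hsub⟩ := hH U hU hHU
  filter_upwards [Metric.closedBall_mem_nhds x hδ] with y hy
  exact hsub y (mem_closedBall_iff_norm.1 hy)

theorem existence_of_solutions_general {E : Type*} [NormedAddCommGroup E] [NormedSpace ℝ E]
    [FiniteDimensional ℝ E] {H : E → Set E} {C : ℝ} (hconv : ∀ x, Convex ℝ (H x))
    (hclosed : ∀ x, IsClosed (H x)) (hgrowth : ∀ x, ∃ v ∈ H x, ‖v‖ ≤ C * (1 + ‖x‖))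
    (hH : UpperHemicontinuous H) (x₀ : E) :
    ∃ x u : ℝ → E, x 0 = x₀ ∧ LocallyIntegrableOn u (Ici 0) ∧
      (∀ t ∈ Ici (0 : ℝ), x t = x 0 + ∫ s in (0 : ℝ)..t, u s) ∧
      ∀ᵐ t ∂volume.restrict (Ici 0), u t ∈ H (x t) := by
  have : CompleteSpace E := FiniteDimensional.complete ℝ E
  have : ProperSpace E := FiniteDimensional.proper_real E
  choose f hfH hf using hgrowth
  have hL : EulerEquiLipschitz f x₀ := eulerEquiLipschitz_of_linear_growth hf x₀
  obtain ⟨𝒰, hl⟩ := Ultrafilter.exists_le (𝓝[>] (0 : ℝ))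
  obtain ⟨x, hx⟩ := hL.exists_isEulerLimit 𝒰 hl
  have hlip := hx.lipschitzOnWith hl hL
  have hdiff := ae_differentiableAt_of_lipschitzOnWith_Icc hlip
  refine ⟨x, deriv x, hx.apply_zero, locallyIntegrableOn_deriv_of_lipschitzOnWith_Icc hlip,
    fun t ht => ?_, ?_⟩
  · obtain ⟨K, hK⟩ := hlip t
    rw [integral_deriv_eq_sub_of_lipschitzOnWith_Icc ht hK
      (hdiff.mono fun s hs hst => hs hst.1), add_sub_cancel]
  · rw [← restrict_Ioi_eq_restrict_Ici, ae_restrict_iff' measurableSet_Ioi]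
    filter_upwards [hdiff] with t ht ht0
    exact hx.hasDerivWithinAt_mem_of_upperHemicontinuousAt hl hL ht0.le hfH (hconv _) (hclosed _)
      (hH _) (ht ht0).hasDerivAt.hasDerivWithinAt

/-- If `H` has nonempty convex compact values, linear growth, and is upper
semicontinuous at every point, then for every initial condition `x₀` there exists an
absolutely continuous solution of the differential inclusion `ẋ(t) ∈ H(x(t))` on `ℝ₊`
starting at `x₀`. -/
theorem existence_of_solutions {d : ℕ} (H : Ed d → Set (Ed d))
    (hval : ∀ x, (H x).Nonempty ∧ Convex ℝ (H x) ∧ IsCompact (H x))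
    (hgrowth : ∃ C : ℝ, 0 ≤ C ∧ ∀ x, ∀ v ∈ H x, ‖v‖ ≤ C * (1 + ‖x‖))
    (husc : ∀ x, USCMapAt H x) :
    ∀ x₀ : Ed d, ∃ x : ℝ → Ed d, x 0 = x₀ ∧ IsSolutionOn H x := by
  obtain ⟨C, -, hC⟩ := hgrowth
  intro x₀
  obtain ⟨x, u, hx₀, hu⟩ := existence_of_solutions_general (H := H) (C := C)
    (fun x => (hval x).2.1) (fun x => (hval x).2.2.isClosed)
    (fun x => (hval x).1.imp fun v hv => ⟨hv, hC x v hv⟩)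
    (fun x => (husc x).upperHemicontinuousAt) x₀
  exact ⟨x, hx₀, u, hu⟩

end
end

section
/- Let X ⊆ ℝ^d be a convex set and let x : [0,1] → ℝ^d be an absolutely continuous curve with x(t) ∈ X for every t ∈ [0,1]. Then for almost every t ∈ [0,1], ⟨v, ẋ(t)⟩ = 0 for every v in the normal cone N_X(x(t)). -/
/-!
A vector `v` is normal to `X` at `x t` exactly when `⟪v, ·⟫` is maximal over `X` at `x t`. Along a
curve `x` in `X`, the function `s ↦ ⟪v, x s⟫` then has a local maximum at `t`, if `t` is an interior
time, so by Fermat's theorem its derivative `⟪v, ẋ t⟫` vanishes as soon as `x` is differentiable at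
`t`. By the Lebesgue differentiation theorem this is the case for almost every `t`.
-/

open MeasureTheory Filter Set RealInnerProductSpace

noncomputable section

/-- The normal cone of a (convex) set `X` at `x`. -/
def normalCone {d : ℕ} (X : Set (Ed d)) (x : Ed d) : Set (Ed d) :=
  {v | ∀ y ∈ X, ⟪v, y - x⟫ ≤ (0 : ℝ)}

section DualNormalCone

variable {E : Type*} [AddCommGroup E] [Module ℝ E] [TopologicalSpace E]

/-- The normal cone of `X` at `x` as a subset of the dual space: the notion available without an
inner product, with normals encoded as continuous linear functionals. -/
def dualNormalCone (X : Set E) (x : E) : Set (StrongDual ℝ E) :=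
  {φ | ∀ y ∈ X, φ (y - x) ≤ 0}

theorem mem_dualNormalCone_iff_isMaxOn {X : Set E} {x : E} {φ : StrongDual ℝ E} :
    φ ∈ dualNormalCone X x ↔ IsMaxOn φ X x := by
  simp only [dualNormalCone, mem_ofPred_eq, map_sub, sub_nonpos, isMaxOn_iff]

theorem mem_normalCone_iff_innerSL_mem_dualNormalCone {d : ℕ} {X : Set (Ed d)} {x v : Ed d} :
    v ∈ normalCone X x ↔ innerSL ℝ v ∈ dualNormalCone X x :=
  Iff.rfl

end DualNormalCone

theorem ae_restrict_Icc_mem_nhds {α : Type*} [LinearOrder α] [TopologicalSpace α]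
    [OrderClosedTopology α] [MeasurableSpace α] [OpensMeasurableSpace α] {μ : Measure α}
    [NullSingletonClass μ] (a b : α) :
    ∀ᵐ t ∂μ.restrict (Icc a b), Icc a b ∈ nhds t := by
  rw [← Measure.restrict_congr_set Ioo_ae_eq_Icc]
  exact (ae_restrict_mem measurableSet_Ioo).mono fun t ht => Icc_mem_nhds ht.1 ht.2

section NormedSpace

variable {E : Type*} [NormedAddCommGroup E] [NormedSpace ℝ E] {x u : ℝ → E}

theorem ae_hasDerivAt_of_eq_add_integral [CompleteSpace E] {a b c : ℝ} {x₀ : E}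
    (hu : IntegrableOn u (Icc a b)) (hc : c ∈ Icc a b)
    (hx : ∀ t ∈ Icc a b, x t = x₀ + ∫ s in c..t, u s) :
    ∀ᵐ t ∂(volume.restrict (Icc a b)), HasDerivAt x (u t) t := by
  have hab : a ≤ b := hc.1.trans hc.2
  have hderiv := ((intervalIntegrable_iff_integrableOn_Icc_of_le hab).2 hu).ae_hasDerivAt_integral
  rw [uIcc_of_le hab, ← ae_restrict_iff' measurableSet_Icc] at hderiv
  filter_upwards [hderiv, ae_restrict_Icc_mem_nhds a b] with t ht hnhds
  exact ((ht c hc).const_add x₀).congr_of_eventuallyEq (eventually_of_mem hnhds hx)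

theorem hasFDerivAt_apply_eq_zero_of_isLocalMaxOn {X : Set E} {f : E → ℝ}
    {f' : StrongDual ℝ E} {x' : E} {t : ℝ} (hf : HasFDerivAt f f' (x t))
    (hmax : IsLocalMaxOn f X (x t)) (hx : HasDerivAt x x' t) (hxX : ∀ᶠ s in nhds t, x s ∈ X) :
    f' x' = 0 :=
  have hlim : Tendsto x (nhds t) (nhdsWithin (x t) X) :=
    tendsto_nhdsWithin_iff.2 ⟨hx.continuousAt, hxX⟩
  IsLocalMax.hasDerivAt_eq_zero (hmax.comp_tendsto hlim) (hf.comp_hasDerivAt t hx)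

theorem normal_cone_orthogonal_to_velocity_general [CompleteSpace E] {a b c : ℝ} {x₀ : E}
    (X : Set E) (hu : IntegrableOn u (Icc a b)) (hc : c ∈ Icc a b)
    (hx : ∀ t ∈ Icc a b, x t = x₀ + ∫ s in c..t, u s) (hxX : ∀ t ∈ Icc a b, x t ∈ X) :
    ∀ᵐ t ∂(volume.restrict (Icc a b)), ∀ φ ∈ dualNormalCone X (x t), φ (u t) = 0 := by
  filter_upwards [ae_hasDerivAt_of_eq_add_integral hu hc hx, ae_restrict_Icc_mem_nhds a b]
    with t hderiv hnhds φ hφ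
  have hmax : IsMaxOn φ X (x t) := mem_dualNormalCone_iff_isMaxOn.1 hφ
  exact hasFDerivAt_apply_eq_zero_of_isLocalMaxOn φ.hasFDerivAt hmax.localize hderiv
    (eventually_of_mem hnhds hxX)

end NormedSpace

/-- If `X ⊆ ℝ^d` is convex and `x : [0,1] → ℝ^d` is an absolutely continuous
curve (with a.e. derivative `u`) remaining in `X`, then for a.e. `t ∈ [0,1]`,
`⟪v, ẋ(t)⟫ = 0` for every `v` in the normal cone `N_X(x(t))`. -/
theorem normal_cone_orthogonal_to_velocity {d : ℕ} (X : Set (Ed d)) (hX : Convex ℝ X)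
    (x u : ℝ → Ed d) (hu : IntegrableOn u (Icc (0:ℝ) 1))
    (hx : ∀ t ∈ Icc (0:ℝ) 1, x t = x 0 + ∫ s in (0:ℝ)..t, u s)
    (hxX : ∀ t ∈ Icc (0:ℝ) 1, x t ∈ X) :
    ∀ᵐ t ∂(volume.restrict (Icc (0:ℝ) 1)),
      ∀ v ∈ normalCone X (x t), ⟪v, u t⟫ = (0:ℝ) := by
  have hdual := normal_cone_orthogonal_to_velocity_general X hu (left_mem_Icc.2 zero_le_one) hx hxX
  exact hdual.mono fun t ht v hv => ht _ (mem_normalCone_iff_innerSL_mem_dualNormalCone.1 hv)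

end
end

section
/- Let f, g : ℝ^d → ℝ be locally Lipschitz and path differentiable, let X ⊆ ℝ^d be a closed convex set, and let x : ℝ₊ → ℝ^d be a solution of the differential inclusion ẋ(t) ∈ −∂f(x(t)) − ∂g(x(t)) − N_X(x(t)) which remains in X. Then for every t ≥ 0, (f+g)(x(t)) − (f+g)(x(0)) = −∫₀ᵗ ‖ẋ(u)‖² du. Consequently, if x(0) ∉ Z = {x : 0 ∈ ∂f(x) + ∂g(x) + N_X(x)}, then (f+g)(x(t)) < (f+g)(x(0)) for every t > 0; in other words, f+g is a strict Lyapunov function for this differential inclusion and the set Z. -/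
open MeasureTheory Filter Set RealInnerProductSpace

noncomputable section

/-- The Clarke subdifferential of `F` at `x`. -/
def clarke {d : ℕ} (F : Ed d → ℝ) (x : Ed d) : Set (Ed d) :=
  convexHull ℝ {v | ∃ xs : ℕ → Ed d, (∀ n, DifferentiableAt ℝ F (xs n)) ∧
    Tendsto xs atTop (nhds x) ∧ Tendsto (fun n => gradient F (xs n)) atTop (nhds v)}

/-- Path differentiability of a function `F : ℝ^d → ℝ`. -/
def PathDifferentiable {d : ℕ} (F : Ed d → ℝ) : Prop :=
  ∀ x u : ℝ → Ed d, IntegrableOn u (Icc (0:ℝ) 1) →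
    (∀ t ∈ Icc (0:ℝ) 1, x t = x 0 + ∫ s in (0:ℝ)..t, u s) →
    ∀ᵐ t ∂(volume.restrict (Icc (0:ℝ) 1)),
      ∀ v ∈ clarke F (x t), HasDerivAt (fun s => F (x s)) (⟪v, u t⟫) t

/-- The set-valued map `p ↦ −∂f(p) − ∂g(p) − N_X(p)`. -/
def DImap {d : ℕ} (f g : Ed d → ℝ) (X : Set (Ed d)) (p : Ed d) : Set (Ed d) :=
  {w | ∃ a ∈ clarke f p, ∃ b ∈ clarke g p, ∃ c ∈ normalCone X p, w = -a - b - c}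

/-- The Clarke critical set `Z = {x : 0 ∈ ∂f(x) + ∂g(x) + N_X(x)}`. -/
def critSet {d : ℕ} (f g : Ed d → ℝ) (X : Set (Ed d)) : Set (Ed d) :=
  {p | ∃ a ∈ clarke f p, ∃ b ∈ clarke g p, ∃ c ∈ normalCone X p, a + b + c = 0}

/-!
Along a solution, write `u = -a - b - c` with `a ∈ ∂f(x)`, `b ∈ ∂g(x)` and `c ∈ N_X(x)`. At an
interior time where `x` is differentiable, `s ↦ ⟪c, x s - x t⟫` is maximal at `s = t` because `x`
stays in `X`, so `⟪c, u⟫ = 0`. The chain rule for path differentiable functions then gives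
`(f ∘ x + g ∘ x)' = ⟪a + b, u⟫ = -‖u‖²` almost everywhere, which integrates to the energy identity
because `f ∘ x` and `g ∘ x` are absolutely continuous. If the energy has not decreased by time `t`,
the identity forces `u = 0` almost everywhere on `[0, t]`, so `x` is constant there and the
inclusion reads `0 ∈ -∂f(x 0) - ∂g(x 0) - N_X(x 0)`.
-/

open Topology

section RealLine

variable {Y Z : Type*} [PseudoMetricSpace Y] [PseudoMetricSpace Z] {a b : ℝ}

lemma absolutelyContinuousOnInterval_of_dist_le_mul {h : ℝ → Y} {φ : ℝ → Z} {K : ℝ}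
    (hφ : AbsolutelyContinuousOnInterval φ a b)
    (hle : ∀ s ∈ uIcc a b, ∀ t ∈ uIcc a b, dist (h s) (h t) ≤ K * dist (φ s) (φ t)) :
    AbsolutelyContinuousOnInterval h a b := by
  refine squeeze_zero' (.of_forall fun E => Finset.sum_nonneg fun _ _ => dist_nonneg) ?_
    (by simpa only [mul_zero] using Tendsto.const_mul K hφ)
  refine mem_inf_of_right fun E hE => ?_
  simp only [mem_ofPred_eq, Finset.mul_sum]
  exact Finset.sum_le_sum fun i hi => hle _ (hE.1 i hi).1 _ (hE.1 i hi).2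

lemma absolutelyContinuousOnInterval_comp_of_locallyLipschitz {V : Type*}
    [SeminormedAddCommGroup V] {F : V → Z} {x : ℝ → V} (hF : LocallyLipschitz F)
    (hx : AbsolutelyContinuousOnInterval x a b) :
    AbsolutelyContinuousOnInterval (fun t => F (x t)) a b := by
  obtain ⟨K, hK⟩ := hF.locallyLipschitzOn.exists_lipschitzOnWith_of_compact
    (isCompact_uIcc.image_of_continuousOn hx.continuousOn)
  exact absolutelyContinuousOnInterval_of_dist_le_mul hx fun s hs t ht =>
    hK.dist_le_mul _ (mem_image_of_mem x hs) _ (mem_image_of_mem x ht)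

lemma ae_uIcc_mem_nhds_of_mem_uIoc (a b : ℝ) : ∀ᵐ t : ℝ, t ∈ uIoc a b → uIcc a b ∈ 𝓝 t := by
  filter_upwards [Measure.ae_ne volume a, Measure.ae_ne volume b] with t hta htb ht
  exact Icc_mem_nhds (by grind [uIoc]) (by grind [uIoc])

variable {h h' : ℝ → ℝ}

lemma intervalIntegrable_of_ae_hasDerivAt (hh : AbsolutelyContinuousOnInterval h a b)
    (hderiv : ∀ᵐ t, t ∈ uIoc a b → HasDerivAt h (h' t) t) :
    IntervalIntegrable h' volume a b :=
  hh.intervalIntegrable_deriv.congr_ae <| (ae_restrict_iff' measurableSet_uIoc).2 <|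
    hderiv.mono fun _ ht hmem => (ht hmem).deriv

lemma integral_eq_sub_of_ae_hasDerivAt (hh : AbsolutelyContinuousOnInterval h a b)
    (hderiv : ∀ᵐ t, t ∈ uIoc a b → HasDerivAt h (h' t) t) :
    ∫ t in a..b, h' t = h b - h a := by
  rw [← hh.integral_deriv_eq_sub]
  exact intervalIntegral.integral_congr_ae <| hderiv.mono fun _ ht hmem => (ht hmem).deriv.symm

lemma quasiMeasurePreserving_const_mul_sub {c : ℝ} (hc : c ≠ 0) (d : ℝ) :
    Measure.QuasiMeasurePreserving (fun t : ℝ => c * (t - d)) := by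
  have hmul : Measure.QuasiMeasurePreserving (fun t : ℝ => c * t) :=
    ⟨measurable_const_mul c, by
      rw [Real.map_volume_mul_left hc]; exact Measure.smul_absolutelyContinuous⟩
  exact hmul.comp (measurePreserving_sub_right volume d).quasiMeasurePreserving

end RealLine

section Curves

variable {E : Type*} [NormedAddCommGroup E] [NormedSpace ℝ E] {x u : ℝ → E} {a b : ℝ}

/-- The curve `x` is absolutely continuous between `a` and `b` with a.e. derivative `u`, encoded
as being the integral of the integrable function `u`. -/
structure IsPrimitiveOn (x u : ℝ → E) (a b : ℝ) : Prop where
  intervalIntegrable : IntervalIntegrable u volume a b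
  eq_add_integral : ∀ t ∈ uIcc a b, x t = x a + ∫ s in a..t, u s

/-- The absolutely continuous curve `x`, with a.e. derivative `u`, solves the differential
inclusion `ẋ ∈ H(x)` between `a` and `b`. -/
structure IsSolutionOn_s3 (H : E → Set E) (x u : ℝ → E) (a b : ℝ) : Prop
    extends IsPrimitiveOn x u a b where
  ae_mem : ∀ᵐ t, t ∈ uIoc a b → u t ∈ H (x t)

namespace IsPrimitiveOn

lemma dist_le_dist_integral_norm (hx : IsPrimitiveOn x u a b) {s t : ℝ} (hs : s ∈ uIcc a b)
    (ht : t ∈ uIcc a b) :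
    dist (x s) (x t) ≤ dist (∫ r in a..s, ‖u r‖) (∫ r in a..t, ‖u r‖) := by
  have hus := hx.intervalIntegrable.mono_set (uIcc_subset_uIcc_left hs)
  have hut := hx.intervalIntegrable.mono_set (uIcc_subset_uIcc_left ht)
  rw [hx.eq_add_integral s hs, hx.eq_add_integral t ht, dist_add_left, dist_eq_norm, Real.dist_eq,
    intervalIntegral.integral_interval_sub_left hus hut,
    intervalIntegral.integral_interval_sub_left hus.norm hut.norm]
  exact intervalIntegral.norm_integral_le_abs_integral_norm

lemma absolutelyContinuousOnInterval (hx : IsPrimitiveOn x u a b) :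
    AbsolutelyContinuousOnInterval x a b :=
  absolutelyContinuousOnInterval_of_dist_le_mul (K := 1)
    (hx.intervalIntegrable.norm.absolutelyContinuousOnInterval_intervalIntegral left_mem_uIcc)
    fun _ hs _ ht => by simpa only [one_mul] using hx.dist_le_dist_integral_norm hs ht

lemma ae_hasDerivAt [CompleteSpace E] (hx : IsPrimitiveOn x u a b) :
    ∀ᵐ t, t ∈ uIoc a b → HasDerivAt x (u t) t := by
  filter_upwards [hx.intervalIntegrable.ae_hasDerivAt_integral, ae_uIcc_mem_nhds_of_mem_uIoc a b]
    with t hderiv hnhds ht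
  refine ((hderiv (uIoc_subset_uIcc ht) a left_mem_uIcc).const_add (x a)).congr_of_eventuallyEq ?_
  filter_upwards [hnhds ht] with s hs using hx.eq_add_integral s hs

lemma comp_add_mul {c d : ℝ} (hc : c ≠ 0) (hx : IsPrimitiveOn x u (d + c * a) (d + c * b)) :
    IsPrimitiveOn (fun s => x (d + c * s)) (fun s => c • u (d + c * s)) a b where
  intervalIntegrable := by
    have hshift := (hx.intervalIntegrable.comp_add_left d).comp_mul_left (c := c)
    simp only [add_sub_cancel_left, mul_div_cancel_left₀ _ hc] at hshift
    exact hshift.smul c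
  eq_add_integral t ht := by
    have hmem : d + c * t ∈ uIcc (d + c * a) (d + c * b) := by
      rw [← image_const_add_uIcc, ← image_const_mul_uIcc]
      exact mem_image_of_mem _ (mem_image_of_mem _ ht)
    rw [hx.eq_add_integral _ hmem, intervalIntegral.integral_smul,
      intervalIntegral.smul_integral_comp_add_mul]

lemma eq_left_of_ae_eq_zero (hx : IsPrimitiveOn x u a b)
    (hu : ∀ᵐ t, t ∈ uIoc a b → u t = 0) {t : ℝ} (ht : t ∈ uIcc a b) : x t = x a := by
  rw [hx.eq_add_integral t ht, intervalIntegral.integral_zero_ae, add_zero]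
  filter_upwards [hu] with s hs hst
  exact hs (by grind [uIoc, uIcc])

end IsPrimitiveOn

namespace IsSolutionOn_s3

variable {H : E → Set E}

lemma of_Ici (hu : LocallyIntegrableOn u (Ici a))
    (hx : ∀ t ∈ Ici a, x t = x a + ∫ s in a..t, u s)
    (hsol : ∀ᵐ t ∂(volume.restrict (Ici a)), u t ∈ H (x t)) (hab : a ≤ b) :
    IsSolutionOn_s3 H x u a b where
  intervalIntegrable := (intervalIntegrable_iff_integrableOn_Icc_of_le hab).2 <|
    hu.integrableOn_compact_subset Icc_subset_Ici_self isCompact_Icc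
  eq_add_integral t ht := hx t (uIcc_of_le hab ▸ ht).1
  ae_mem := by
    filter_upwards [(ae_restrict_iff' measurableSet_Ici).1 hsol] with t hmem ht
    exact hmem (uIoc_of_le hab ▸ ht).1.le

lemma zero_mem_of_ae_eq_zero (hx : IsSolutionOn_s3 H x u a b) (hab : a ≠ b)
    (hu : ∀ᵐ t, t ∈ uIoc a b → u t = 0) : 0 ∈ H (x a) := by
  by_contra hzero
  have hnull : ∀ᵐ t : ℝ, t ∉ uIoc a b := by
    filter_upwards [hu, hx.ae_mem] with t hut hmem ht
    rw [hut ht, hx.eq_left_of_ae_eq_zero hu (uIoc_subset_uIcc ht)] at hmem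
    exact hzero (hmem ht)
  rw [← measure_eq_zero_iff_ae_notMem, Real.volume_uIoc, ENNReal.ofReal_eq_zero,
    abs_nonpos_iff, sub_eq_zero] at hnull
  exact hab hnull.symm

lemma integral_norm_sq_pos (hx : IsSolutionOn_s3 H x u a b) (hab : a < b)
    (hint : IntervalIntegrable (fun t => ‖u t‖ ^ 2) volume a b) (hzero : 0 ∉ H (x a)) :
    0 < ∫ t in a..b, ‖u t‖ ^ 2 := by
  refine (intervalIntegral.integral_nonneg hab.le fun t _ => sq_nonneg ‖u t‖).lt_of_ne' ?_
  contrapose! hzero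
  rw [intervalIntegral.integral_eq_zero_iff_of_le_of_nonneg_ae hab.le
    (.of_forall fun t => sq_nonneg ‖u t‖) hint] at hzero
  refine hx.zero_mem_of_ae_eq_zero hab.ne ?_
  filter_upwards [(ae_restrict_iff' measurableSet_Ioc).1 hzero] with t hut ht
  simpa using hut (uIoc_of_le hab.le ▸ ht)

end IsSolutionOn_s3

end Curves

section Clarke

variable {d : ℕ} {f g F : Ed d → ℝ} {X : Set (Ed d)} {x u : ℝ → Ed d} {a b : ℝ}

lemma PathDifferentiable.ae_hasDerivAt (hF : PathDifferentiable F)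
    (hx : IsPrimitiveOn x u a b) :
    ∀ᵐ t, t ∈ uIoc a b → ∀ v ∈ clarke F (x t), HasDerivAt (fun s => F (x s)) ⟪v, u t⟫ t := by
  rcases eq_or_ne a b with rfl | hab
  · simp
  have hc : b - a ≠ 0 := sub_ne_zero.2 hab.symm
  have hrescaled : IsPrimitiveOn (fun s => x (a + (b - a) * s))
      (fun s => (b - a) • u (a + (b - a) * s)) 0 1 :=
    IsPrimitiveOn.comp_add_mul hc (by simpa using hx)
  have hunit := hF _ _
    ((intervalIntegrable_iff_integrableOn_Icc_of_le zero_le_one).1 hrescaled.intervalIntegrable)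
    fun t ht => hrescaled.eq_add_integral t (Icc_subset_uIcc ht)
  have hinv (t : ℝ) : a + (b - a) * ((b - a)⁻¹ * (t - a)) = t := by field_simp; ring
  filter_upwards [(quasiMeasurePreserving_const_mul_sub (inv_ne_zero hc) a).ae
    ((ae_restrict_iff' measurableSet_Icc).1 hunit)] with t htunit ht v hv
  have hmem : (b - a)⁻¹ * (t - a) ∈ Icc (0 : ℝ) 1 := by
    obtain ⟨θ, hθ, rfl⟩ : t ∈ (fun θ : ℝ => a + θ • (b - a)) '' Icc 0 1 := by
      rw [← segment_eq_image', segment_eq_uIcc]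
      exact uIoc_subset_uIcc ht
    simpa [mul_comm θ, hc] using hθ
  have hderiv : HasDerivAt (fun s => F (x s)) (⟪v, (b - a) • u t⟫ * ((b - a)⁻¹ * 1)) t := by
    simpa only [Function.comp_def, id_eq, hinv] using (htunit hmem v (by rwa [hinv])).comp t
      (((hasDerivAt_id t).sub_const a).const_mul (b - a)⁻¹)
  convert hderiv using 1
  rw [real_inner_smul_right]
  field_simp

lemma inner_eq_zero_of_mem_normalCone {t : ℝ} {c w : Ed d} (hc : c ∈ normalCone X (x t))
    (hX : ∀ᶠ s in 𝓝 t, x s ∈ X) (hx : HasDerivAt x w t) : ⟪c, w⟫ = (0 : ℝ) := by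
  have hmax : IsLocalMax (fun s => (⟪c, x s - x t⟫ : ℝ)) t := by
    filter_upwards [hX] with s hs
    simpa only [sub_self, inner_zero_right] using hc (x s) hs
  refine hmax.hasDerivAt_eq_zero ?_
  simpa using (hasDerivAt_const t c).inner ℝ (hx.sub_const (x t))

lemma exists_inner_add_inner_eq_neg_norm_sq {p w : Ed d} (hw : w ∈ DImap f g X p)
    (horth : ∀ c ∈ normalCone X p, ⟪c, w⟫ = (0 : ℝ)) :
    ∃ α ∈ clarke f p, ∃ β ∈ clarke g p, ⟪α, w⟫ + ⟪β, w⟫ = -‖w‖ ^ 2 := by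
  obtain ⟨α, hα, β, hβ, c, hc, hw_eq⟩ := hw
  refine ⟨α, hα, β, hβ, ?_⟩
  calc ⟪α, w⟫ + ⟪β, w⟫ = -⟪-α - β - c, w⟫ := by
        rw [inner_sub_left, inner_sub_left, inner_neg_left, horth c hc]; ring
    _ = -‖w‖ ^ 2 := by rw [← hw_eq, real_inner_self_eq_norm_sq]

lemma zero_mem_DImap_iff {p : Ed d} : 0 ∈ DImap f g X p ↔ p ∈ critSet f g X := by
  have hneg (α β c : Ed d) : 0 = -α - β - c ↔ α + β + c = 0 := by grind
  simp only [DImap, critSet, mem_ofPred_eq, hneg]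

namespace IsSolutionOn_s3

lemma ae_hasDerivAt_energy (hx : IsSolutionOn_s3 (DImap f g X) x u a b)
    (hf : PathDifferentiable f) (hg : PathDifferentiable g) (hX : ∀ t ∈ uIcc a b, x t ∈ X) :
    ∀ᵐ t, t ∈ uIoc a b → HasDerivAt (fun s => f (x s) + g (x s)) (-‖u t‖ ^ 2) t := by
  filter_upwards [hf.ae_hasDerivAt hx.toIsPrimitiveOn, hg.ae_hasDerivAt hx.toIsPrimitiveOn,
    hx.ae_hasDerivAt, hx.ae_mem, ae_uIcc_mem_nhds_of_mem_uIoc a b] with t hft hgt hxt hmem hnhds ht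
  have hstay : ∀ᶠ s in 𝓝 t, x s ∈ X := mem_of_superset (hnhds ht) hX
  obtain ⟨α, hα, β, hβ, hsum⟩ := exists_inner_add_inner_eq_neg_norm_sq (hmem ht)
    fun c hc => inner_eq_zero_of_mem_normalCone hc hstay (hxt ht)
  exact hsum ▸ (hft ht α hα).add (hgt ht β hβ)

lemma intervalIntegrable_norm_sq_and_energy_eq (hx : IsSolutionOn_s3 (DImap f g X) x u a b)
    (hf : LocallyLipschitz f) (hg : LocallyLipschitz g)
    (hfp : PathDifferentiable f) (hgp : PathDifferentiable g) (hX : ∀ t ∈ uIcc a b, x t ∈ X) :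
    IntervalIntegrable (fun t => ‖u t‖ ^ 2) volume a b ∧
      (f (x b) + g (x b)) - (f (x a) + g (x a)) = -∫ t in a..b, ‖u t‖ ^ 2 := by
  have hxac := hx.absolutelyContinuousOnInterval
  have hac := (absolutelyContinuousOnInterval_comp_of_locallyLipschitz hf hxac).fun_add
    (absolutelyContinuousOnInterval_comp_of_locallyLipschitz hg hxac)
  have hderiv := hx.ae_hasDerivAt_energy hfp hgp hX
  refine ⟨?_, ?_⟩
  · simpa only [Pi.neg_def, neg_neg] using (intervalIntegrable_of_ae_hasDerivAt hac hderiv).neg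
  · rw [← integral_eq_sub_of_ae_hasDerivAt hac hderiv, intervalIntegral.integral_neg]

end IsSolutionOn_s3

end Clarke

theorem energy_identity_strict_lyapunov_general {d : ℕ} (f g : Ed d → ℝ)
    (hf : LocallyLipschitz f) (hg : LocallyLipschitz g)
    (hfp : PathDifferentiable f) (hgp : PathDifferentiable g)
    (X : Set (Ed d)) (x u : ℝ → Ed d) (hu : LocallyIntegrableOn u (Ici (0 : ℝ)))
    (hx : ∀ t ∈ Ici (0 : ℝ), x t = x 0 + ∫ s in (0 : ℝ)..t, u s)
    (hsol : ∀ᵐ t ∂(volume.restrict (Ici (0 : ℝ))), u t ∈ DImap f g X (x t))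
    (hxX : ∀ t ∈ Ici (0 : ℝ), x t ∈ X) :
    (∀ t ∈ Ici (0 : ℝ), IntervalIntegrable (fun s => ‖u s‖ ^ 2) volume 0 t ∧
      (f (x t) + g (x t)) - (f (x 0) + g (x 0)) = -∫ s in (0 : ℝ)..t, ‖u s‖ ^ 2) ∧
    (x 0 ∉ critSet f g X → ∀ t > (0 : ℝ), f (x t) + g (x t) < f (x 0) + g (x 0)) := by
  have hsolOn {t : ℝ} (ht : 0 ≤ t) : IsSolutionOn_s3 (DImap f g X) x u 0 t := .of_Ici hu hx hsol ht
  have henergy (t : ℝ) (ht : 0 ≤ t) :=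
    (hsolOn ht).intervalIntegrable_norm_sq_and_energy_eq hf hg hfp hgp
      fun s hs => hxX s (uIcc_of_le ht ▸ hs).1
  refine ⟨henergy, fun hcrit t ht => ?_⟩
  obtain ⟨hint, hdissipation⟩ := henergy t ht.le
  have hpos : 0 < ∫ s in (0 : ℝ)..t, ‖u s‖ ^ 2 :=
    (hsolOn ht.le).integral_norm_sq_pos ht hint (mt zero_mem_DImap_iff.1 hcrit)
  linarith

/-- For `f, g` locally Lipschitz and path differentiable, `X` closed convex and
`x` an absolutely continuous solution (with a.e. derivative `u`) of
`ẋ(t) ∈ −∂f(x(t)) − ∂g(x(t)) − N_X(x(t))` remaining in `X`, one has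
`(f+g)(x(t)) − (f+g)(x(0)) = −∫₀ᵗ ‖ẋ(s)‖² ds` for every `t ≥ 0`; consequently, if
`x(0) ∉ Z` then `(f+g)(x(t)) < (f+g)(x(0))` for every `t > 0` (`f+g` is a strict Lyapunov
function for this differential inclusion and the set `Z`). -/
theorem energy_identity_strict_lyapunov {d : ℕ} (f g : Ed d → ℝ)
    (hf : LocallyLipschitz f) (hg : LocallyLipschitz g)
    (hfp : PathDifferentiable f) (hgp : PathDifferentiable g)
    (X : Set (Ed d)) (hXcl : IsClosed X) (hXcv : Convex ℝ X)
    (x u : ℝ → Ed d) (hu : LocallyIntegrableOn u (Ici (0:ℝ)))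
    (hx : ∀ t ∈ Ici (0:ℝ), x t = x 0 + ∫ s in (0:ℝ)..t, u s)
    (hsol : ∀ᵐ t ∂(volume.restrict (Ici (0:ℝ))), u t ∈ DImap f g X (x t))
    (hxX : ∀ t ∈ Ici (0:ℝ), x t ∈ X) :
    (∀ t ∈ Ici (0:ℝ),
      (f (x t) + g (x t)) - (f (x 0) + g (x 0)) = -∫ s in (0:ℝ)..t, ‖u s‖^2) ∧
    (x 0 ∉ critSet f g X → ∀ t > (0:ℝ), f (x t) + g (x t) < f (x 0) + g (x 0)) := by
  have h := energy_identity_strict_lyapunov_general f g hf hg hfp hgp X x u hu hx hsol hxX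
  exact ⟨fun t ht => (h.1 t ht).2, h.2⟩

end
end
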